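/- arXiv:1601.05595 — 2 statements merged into one kernel-verified Lean document; each statement's English description precedes it below -/
import Mathlib

section
/- Let C be a q-ary (n,k,r) LRC with all symbol locality, where k ≥ 1 and r ≥ 1, and let d be its minimum distance. Then for every integer t with 1 ≤ t ≤ ⌈k/r⌉ − 1 there exists a q-ary linear code of length n − t(r+1) whose dimension is at least k − tr and whose minimum distance is at least d. -/
/-- Coordinate `i` of the linear code `C` has locality `r`. -/
def HasLocality {F ι : Type*} [Field F] [Fintype ι]
    (C : Submodule F (ι → F)) (i : ι) (r : ℕ) : Prop :=
  ∃ R : Finset ι, i ∉ R ∧ R.card ≤ r ∧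
    ∀ c ∈ C, ∀ c' ∈ C, (∀ j ∈ R, c j = c' j) → c i = c' i

/-- The minimum distance of a linear code: the least Hamming weight of a nonzero codeword. -/
noncomputable def minDist {F ι : Type*} [Field F] [Fintype ι] [DecidableEq F]
    (C : Submodule F (ι → F)) : ℕ :=
  sInf {w | ∃ c ∈ C, c ≠ 0 ∧ hammingNorm c = w}

/-- Subcode of codewords vanishing on `I`. -/
def subVan {F : Type*} [Field F] {n : ℕ} (C : Submodule F (Fin n → F)) (I : Finset (Fin n)) :
    Submodule F (Fin n → F) where
  carrier := {c | c ∈ C ∧ ∀ j ∈ I, c j = 0}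
  add_mem' := by
    rintro a b ⟨ha, ha'⟩ ⟨hb, hb'⟩
    exact ⟨C.add_mem ha hb, fun j hj => by simp [ha' j hj, hb' j hj]⟩
  zero_mem' := ⟨C.zero_mem, fun _ _ => rfl⟩
  smul_mem' := by
    rintro x a ⟨ha, ha'⟩
    exact ⟨C.smul_mem x ha, fun j hj => by simp [ha' j hj]⟩

theorem mem_subVan {F : Type*} [Field F] {n : ℕ} (C : Submodule F (Fin n → F))
    (I : Finset (Fin n)) (c : Fin n → F) : c ∈ subVan C I ↔ c ∈ C ∧ ∀ j ∈ I, c j = 0 := Iff.rfl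

theorem subVan_insert {F : Type*} [Field F] {n : ℕ} (C : Submodule F (Fin n → F))
    (I : Finset (Fin n)) (i : Fin n) :
    Module.finrank F (subVan C I) ≤ Module.finrank F (subVan C (insert i I)) + 1 := by
  have h1 : subVan C (insert i I) =
      subVan C I ⊓ LinearMap.ker (LinearMap.proj i : (Fin n → F) →ₗ[F] F) := by
    ext c
    simp only [mem_subVan, Submodule.mem_inf, LinearMap.mem_ker, LinearMap.proj_apply,
      Finset.mem_insert, forall_eq_or_imp]
    tauto
  have h2 := Submodule.finrank_sup_add_finrank_inf_eq (subVan C I)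
    (LinearMap.ker (LinearMap.proj i : (Fin n → F) →ₗ[F] F))
  have h3 := LinearMap.finrank_range_add_finrank_ker (LinearMap.proj i : (Fin n → F) →ₗ[F] F)
  have h4 := Submodule.finrank_le (LinearMap.range (LinearMap.proj i : (Fin n → F) →ₗ[F] F))
  have h5 := Submodule.finrank_le
    (subVan C I ⊔ (LinearMap.ker (LinearMap.proj i : (Fin n → F) →ₗ[F] F)))
  rw [Module.finrank_self] at h4
  rw [h1]
  omega

theorem subVan_mono {F : Type*} [Field F] {n : ℕ} (C : Submodule F (Fin n → F))
    (I J : Finset (Fin n)) :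
    Module.finrank F (subVan C I) + I.card ≤
      Module.finrank F (subVan C (J ∪ I)) + (J ∪ I).card := by
  induction J using Finset.induction_on with
  | empty => rw [Finset.empty_union]
  | insert a J ha ih =>
    rw [Finset.insert_union]
    by_cases h : a ∈ J ∪ I
    · rwa [Finset.insert_eq_of_mem h]
    · have := subVan_insert C (J ∪ I) a
      rw [Finset.card_insert_of_notMem h]
      omega

theorem exists_set {F : Type*} [Field F] {n k r : ℕ}
    (C : Submodule F (Fin n → F)) (hCk : Module.finrank F C = k)
    (hloc : ∀ i : Fin n, HasLocality C i r) (t : ℕ) (ht : t * r < k) (s : ℕ) (hs : s ≤ t) :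
    ∃ I : Finset (Fin n), I.card ≤ s * (r + 1) ∧
      k + s ≤ Module.finrank F (subVan C I) + I.card := by
  induction s with
  | zero =>
    refine ⟨∅, by simp, ?_⟩
    have : subVan C ∅ = C := by ext c; simp [mem_subVan]
    rw [this, hCk]; simp
  | succ s ih =>
    obtain ⟨I, hI1, hI2⟩ := ih (by omega)
    have hsr : s * r ≤ t * r := Nat.mul_le_mul_right r (by omega)
    have hpos : 0 < Module.finrank F (subVan C I) := by
      rw [mul_add] at hI1; omega
    have hne : subVan C I ≠ ⊥ := by
      intro h; rw [h, finrank_bot] at hpos; omega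
    obtain ⟨c, hc, hc0⟩ := Submodule.exists_mem_ne_zero_of_ne_bot hne
    obtain ⟨i, hi⟩ := Function.ne_iff.mp hc0
    have hiI : i ∉ I := fun h => hi (hc.2 i h)
    obtain ⟨R, hiR, hR, hdet⟩ := hloc i
    have hiU : i ∉ R ∪ I := by simp [hiI, hiR]
    refine ⟨insert i (R ∪ I), ?_, ?_⟩
    · rw [Finset.card_insert_of_notMem hiU]
      have := Finset.card_union_le R I
      rw [add_mul]; omega
    · have heq : subVan C (insert i (R ∪ I)) = subVan C (R ∪ I) := by
        ext x
        simp only [mem_subVan, Finset.mem_insert, forall_eq_or_imp]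
        constructor
        · rintro ⟨h1, -, h2⟩; exact ⟨h1, h2⟩
        · rintro ⟨h1, h2⟩
          refine ⟨h1, ?_, h2⟩
          exact hdet x h1 0 C.zero_mem (fun j hj => h2 j (Finset.mem_union_left _ hj))
      have := subVan_mono C I R
      rw [heq, Finset.card_insert_of_notMem hiU]
      omega

/-- For an `(n,k,r)` LRC with all symbol locality and minimum distance `d`, for every `t` with
`1 ≤ t ≤ ⌈k/r⌉ - 1` there exists a `q`-ary linear code of length `n - t(r+1)`, dimension at
least `k - tr`, and minimum distance at least `d`. -/
theorem stmt_4 {F : Type*} [Field F] [Fintype F] [DecidableEq F]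
    {n k r : ℕ} (hk : 1 ≤ k) (hr : 1 ≤ r)
    (C : Submodule F (Fin n → F)) (hCk : Module.finrank F C = k)
    (hloc : ∀ i : Fin n, HasLocality C i r)
    (t : ℕ) (ht1 : 1 ≤ t) (ht2 : (t : ℤ) ≤ ⌈(k : ℚ) / r⌉ - 1) :
    ∃ C' : Submodule F (Fin (n - t * (r + 1)) → F),
      k - t * r ≤ Module.finrank F C' ∧
      ∀ c ∈ C', c ≠ 0 → minDist C ≤ hammingNorm c := by
  have ht : t * r < k := by
    have h1 : (t : ℤ) < ⌈(k : ℚ) / r⌉ := by omega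
    rw [Int.lt_ceil, lt_div_iff₀ (by exact_mod_cast hr)] at h1
    exact_mod_cast h1
  obtain ⟨I, hI1, hI2⟩ := exists_set C hCk hloc t ht t le_rfl
  have hn : t * (r + 1) ≤ n := by
    have h := subVan_mono C I Finset.univ
    have hb : subVan C Finset.univ = ⊥ := by
      rw [eq_bot_iff]
      intro c hc
      exact funext fun j => hc.2 j (Finset.mem_univ j)
    have hu : Finset.univ ∪ I = Finset.univ := by simp
    rw [hu, hb, finrank_bot, Finset.card_univ, Fintype.card_fin] at h
    rw [mul_add]; omega
  obtain ⟨J, hIJ, hJ⟩ := Finset.exists_superset_card_eq hI1 (by simpa using hn)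
  have hf := subVan_mono C I J
  rw [Finset.union_eq_left.mpr hIJ, hJ] at hf
  have hdim : k - t * r ≤ Module.finrank F (subVan C J) := by
    rw [mul_add] at hf; omega
  have hcard : Jᶜ.card = n - t * (r + 1) := by
    rw [Finset.card_compl, hJ, Fintype.card_fin]
  let e := Jᶜ.orderEmbOfFin hcard
  have he : ∀ j, j ∉ J → ∃ a, e a = j := by
    intro j hj
    have : j ∈ Set.range (Jᶜ.orderEmbOfFin hcard) := by
      rw [Finset.range_orderEmbOfFin]; simpa using hj
    exact this
  let f : (Fin n → F) →ₗ[F] (Fin (n - t * (r + 1)) → F) := LinearMap.funLeft F F e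
  have hfa : ∀ c a, f c a = c (e a) := fun _ _ => rfl
  refine ⟨(subVan C J).map f, ?_, ?_⟩
  · have hinj : Function.Injective (f.domRestrict (subVan C J)) := by
      rw [← LinearMap.ker_eq_bot, LinearMap.ker_eq_bot']
      rintro ⟨c, hc⟩ h
      ext j
      by_cases hj : j ∈ J
      · exact hc.2 j hj
      · obtain ⟨a, rfl⟩ := he j hj
        exact congrFun h a
    have h := LinearMap.finrank_range_of_inj hinj
    rw [LinearMap.range_domRestrict] at h
    rw [h]; exact hdim
  · rintro _ ⟨c, hc, rfl⟩ hne
    have hc0 : c ≠ 0 := by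
      rintro rfl; exact hne (map_zero f)
    refine (Nat.sInf_le ⟨c, hc.1, hc0, rfl⟩ : minDist C ≤ hammingNorm c).trans ?_
    unfold hammingNorm
    rw [← Finset.card_map e.toEmbedding (s := Finset.univ.filter fun a => f c a ≠ 0)]
    apply Finset.card_le_card
    intro j hj
    have hj' : c j ≠ 0 := by simpa using hj
    obtain ⟨a, rfl⟩ := he j (fun h => hj' (hc.2 j h))
    rw [Finset.mem_map]
    exact ⟨a, by simpa [hfa] using hj', rfl⟩
end

section
/- (Construction 2) Let F_q be a finite field, r ≥ 3, l ≥ 1, and n = l(r+1). Let α_{i,j} ∈ F_q for i ∈ {1,…,l}, j ∈ {1,…,r+1}, with α_{i,j_1} ≠ α_{i,j_2} whenever j_1 ≠ j_2. Let H be the (l+2)×n matrix over F_q whose columns are indexed by pairs (i,j), such that for i' ∈ {1,…,l} the entry of row i' in column (i,j) equals 1 if i = i' and 0 otherwise, the entry of row l+1 in column (i,j) equals α_{i,j}, and the entry of row l+2 in column (i,j) equals α_{i,j}^2. Then the linear code C = {x ∈ F_q^n : Hx = 0} has dimension n − l − 2, every coordinate of C has locality r, and the minimum distance of C equals 4, which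 equals the Singleton-like bound n − k − ⌈k/r⌉ + 2 for k = n − l − 2. -/
section helpers

variable {F : Type*} [Field F] {l r : ℕ}

/-- Membership in the code gives the three families of equations. -/
lemma aux_mem_iff (α : Fin l → Fin (r + 1) → F)
    (H : Matrix (Fin l ⊕ Fin 2) (Fin l × Fin (r + 1)) F)
    (hH1 : ∀ (i' : Fin l) (p : Fin l × Fin (r + 1)),
      H (Sum.inl i') p = if p.1 = i' then 1 else 0)
    (hH2 : ∀ p : Fin l × Fin (r + 1), H (Sum.inr 0) p = α p.1 p.2)
    (hH3 : ∀ p : Fin l × Fin (r + 1), H (Sum.inr 1) p = α p.1 p.2 ^ 2)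
    (c : Fin l × Fin (r + 1) → F) :
    c ∈ LinearMap.ker H.mulVecLin ↔
      (∀ i, ∑ j, c (i, j) = 0) ∧ (∑ i, ∑ j, α i j * c (i, j) = 0) ∧
        (∑ i, ∑ j, α i j ^ 2 * c (i, j) = 0) := by
  have key : ∀ i', (∑ p, H (Sum.inl i') p * c p) = ∑ j, c (i', j) := by
    intro i'
    rw [Fintype.sum_prod_type, Finset.sum_eq_single i']
    · simp [hH1]
    · intro b _ hb
      simp [hH1, hb]
    · simp
  rw [LinearMap.mem_ker, Matrix.mulVecLin_apply, funext_iff, Sum.forall, Fin.forall_fin_two]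
  simp only [Matrix.mulVec, dotProduct, key, hH2, hH3, Pi.zero_apply, Fintype.sum_prod_type]

/-- A codeword supported on one group has at least four nonzero entries. -/
lemma aux_next (β : Fin (r + 1) → F) (hβ : Function.Injective β) (x : Fin (r + 1) → F)
    (h0 : ∑ j, x j = 0) (h1 : ∑ j, β j * x j = 0) (h2 : ∑ j, β j ^ 2 * x j = 0)
    (j a b : Fin (r + 1)) (hj : x j ≠ 0) (ha : a ≠ j) (hb : b ≠ j) :
    ∃ k, k ≠ j ∧ k ≠ a ∧ k ≠ b ∧ x k ≠ 0 := by
  by_contra hcon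
  push Not at hcon
  have hs : ∑ k, (β k - β a) * (β k - β b) * x k = 0 := by
    have : ∑ k, (β k - β a) * (β k - β b) * x k =
        ∑ k, β k ^ 2 * x k - (β a + β b) * ∑ k, β k * x k + β a * β b * ∑ k, x k := by
      rw [Finset.mul_sum, Finset.mul_sum, ← Finset.sum_sub_distrib, ← Finset.sum_add_distrib]
      exact Finset.sum_congr rfl fun k _ => by ring
    rw [this, h0, h1, h2]; ring
  rw [Finset.sum_eq_single j] at hs
  · have e1 : β j - β a ≠ 0 := sub_ne_zero.2 fun h => ha (hβ h).symm
    have e2 : β j - β b ≠ 0 := sub_ne_zero.2 fun h => hb (hβ h).symm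
    exact mul_ne_zero (mul_ne_zero e1 e2) hj hs
  · intro k _ hk
    by_cases h3 : k = a
    · simp [h3]
    by_cases h4 : k = b
    · simp [h4]
    simp [hcon k hk h3 h4]
  · simp

lemma aux_other (x : Fin (r + 1) → F) (h0 : ∑ j, x j = 0) (j : Fin (r + 1)) (hj : x j ≠ 0) :
    ∃ k, k ≠ j ∧ x k ≠ 0 := by
  by_contra hcon
  push Not at hcon
  rw [Finset.sum_eq_single j (fun k _ hk => hcon k hk) (by simp)] at h0
  exact hj h0

lemma aux_four [DecidableEq F] {ι : Type*} [Fintype ι] [DecidableEq ι] (c : ι → F) (p q s t : ι)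
    (hp : c p ≠ 0) (hq : c q ≠ 0) (hs : c s ≠ 0) (ht : c t ≠ 0)
    (h1 : p ≠ q) (h2 : p ≠ s) (h3 : p ≠ t) (h4 : q ≠ s) (h5 : q ≠ t) (h6 : s ≠ t) :
    4 ≤ hammingNorm c := by
  have : ({p, q, s, t} : Finset ι).card = 4 := by
    rw [Finset.card_eq_succ]
    refine ⟨p, {q, s, t}, by simp [*], rfl, ?_⟩
    rw [Finset.card_eq_three]
    exact ⟨q, s, t, h4, h5, h6, rfl⟩
  rw [← this, hammingNorm]
  apply Finset.card_le_card
  intro u hu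
  simp only [Finset.mem_insert, Finset.mem_singleton] at hu
  rcases hu with rfl | rfl | rfl | rfl <;> simp [*]

lemma aux_lower [DecidableEq F] (α : Fin l → Fin (r + 1) → F)
    (hα : ∀ i : Fin l, Function.Injective (α i))
    (hr : 3 ≤ r)
    (c : Fin l × Fin (r + 1) → F) (hc : c ≠ 0)
    (h0 : ∀ i, ∑ j, c (i, j) = 0) (h1 : ∑ i, ∑ j, α i j * c (i, j) = 0)
    (h2 : ∑ i, ∑ j, α i j ^ 2 * c (i, j) = 0) : 4 ≤ hammingNorm c := by
  obtain ⟨⟨i, j⟩, hij⟩ := Function.ne_iff.1 hc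
  simp only [Pi.zero_apply] at hij
  obtain ⟨k, hk, hck⟩ := aux_other (fun j => c (i, j)) (h0 i) j hij
  by_cases hex : ∃ i' j', i' ≠ i ∧ c (i', j') ≠ 0
  · obtain ⟨i', j', hi', hc'⟩ := hex
    obtain ⟨k', hk', hck'⟩ := aux_other (fun j => c (i', j)) (h0 i') j' hc'
    refine aux_four c (i, j) (i, k) (i', j') (i', k') hij hck hc' hck' ?_ ?_ ?_ ?_ ?_ ?_ <;>
      simp [Prod.ext_iff, hk.symm, hi'.symm, hk'.symm]
  · push Not at hex
    rw [Finset.sum_eq_single i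
      (fun b _ hb => Finset.sum_eq_zero fun j _ => by simp [hex b j hb]) (by simp)] at h1 h2
    have nxt := aux_next (α i) (hα i) (fun j => c (i, j)) (h0 i) h1 h2 j
    obtain ⟨m, hm1, hm2, -, hm⟩ := nxt k k hij hk hk
    obtain ⟨t, ht1, ht2, ht3, ht⟩ := nxt k m hij hk hm1
    refine aux_four c (i, j) (i, k) (i, m) (i, t) hij hck hm ht ?_ ?_ ?_ ?_ ?_ ?_ <;>
      simp [Prod.ext_iff, hk.symm, hm1.symm, hm2.symm, ht1.symm, ht2.symm, ht3.symm]

/-- Existence of a nonzero word of weight at most four. -/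
lemma aux_upper [DecidableEq F] (α : Fin l → Fin (r + 1) → F) (hr : 3 ≤ r) (hl : 1 ≤ l) :
    ∃ c : Fin l × Fin (r + 1) → F, c ≠ 0 ∧ hammingNorm c ≤ 4 ∧
      (∀ i, ∑ j, c (i, j) = 0) ∧ (∑ i, ∑ j, α i j * c (i, j) = 0) ∧
        (∑ i, ∑ j, α i j ^ 2 * c (i, j) = 0) := by
  let i0 : Fin l := ⟨0, hl⟩
  let e : Fin 4 → Fin (r + 1) := Fin.castLE (by omega)
  have he : Function.Injective e := Fin.castLE_injective _
  let M : Matrix (Fin 3) (Fin 4) F := fun a k => α i0 (e k) ^ (a : ℕ)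
  have hker : LinearMap.ker M.mulVecLin ≠ ⊥ :=
    LinearMap.ker_ne_bot_of_finrank_lt (by simp)
  obtain ⟨g, hg, hg0⟩ := (Submodule.ne_bot_iff _).1 hker
  let x : Fin (r + 1) → F := Function.extend e g 0
  have hxe : ∀ k, x (e k) = g k := fun k => he.extend_apply g (0 : Fin (r + 1) → F) k
  have hxn : ∀ j, j ∉ Set.range e → x j = 0 := fun j hj =>
    Function.extend_apply' g (0 : Fin (r + 1) → F) j (by simpa using hj)
  have hsum : ∀ a : Fin 3, ∑ j, α i0 j ^ (a : ℕ) * x j = 0 := by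
    intro a
    have h := congrFun (LinearMap.mem_ker.1 hg) a
    simp only [Matrix.mulVecLin_apply, Matrix.mulVec, dotProduct, Pi.zero_apply] at h
    rw [← h]
    symm
    apply Finset.sum_of_injOn e he.injOn
    · simp
    · intro j _ hj
      rw [hxn j (by simpa using hj), mul_zero]
    · intro k _
      rw [hxe]
  let c : Fin l × Fin (r + 1) → F := fun p => if p.1 = i0 then x p.2 else 0
  have hc0 : ∀ j, c (i0, j) = x j := fun j => by simp [c]
  have hcn : ∀ i j, i ≠ i0 → c (i, j) = 0 := fun i j h => by simp [c, h]
  refine ⟨c, ?_, ?_, ?_, ?_, ?_⟩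
  · intro h
    apply hg0
    funext k
    rw [← hxe, ← hc0, h]; rfl
  · rw [hammingNorm]
    calc _ ≤ (Finset.univ.image (fun k : Fin 4 => (i0, e k))).card := by
          apply Finset.card_le_card
          rintro ⟨i, j⟩ hp
          simp only [Finset.mem_filter, Finset.mem_univ, true_and] at hp
          have hi : i = i0 := by
            by_contra h; exact hp (hcn i j h)
          subst hi
          rw [hc0] at hp
          have : j ∈ Set.range e := by
            by_contra h; exact hp (hxn j h)
          obtain ⟨k, rfl⟩ := this
          simp
      _ ≤ _ := Finset.card_image_le.trans (by simp)
  · intro i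
    by_cases h : i = i0
    · subst h
      simpa [hc0] using hsum 0
    · simp [hcn i _ h]
  · rw [Finset.sum_eq_single i0
      (fun b _ hb => Finset.sum_eq_zero fun j _ => by simp [hcn b j hb]) (by simp)]
    simpa [hc0] using hsum 1
  · rw [Finset.sum_eq_single i0
      (fun b _ hb => Finset.sum_eq_zero fun j _ => by simp [hcn b j hb]) (by simp)]
    simpa [hc0] using hsum 2

lemma aux_vand (x y z u a b : F) (hxy : x ≠ y) (hxz : x ≠ z) (hyz : y ≠ z)
    (h1 : u + a * x + b * x ^ 2 = 0) (h2 : u + a * y + b * y ^ 2 = 0)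
    (h3 : u + a * z + b * z ^ 2 = 0) : a = 0 ∧ b = 0 := by
  have e1 : a + b * (x + y) = 0 := by
    apply mul_left_cancel₀ (sub_ne_zero.2 hxy); linear_combination h1 - h2
  have e2 : a + b * (x + z) = 0 := by
    apply mul_left_cancel₀ (sub_ne_zero.2 hxz); linear_combination h1 - h3
  have hb : b = 0 := by
    apply mul_left_cancel₀ (sub_ne_zero.2 hyz); linear_combination e1 - e2
  exact ⟨by simpa [hb] using e1, hb⟩

lemma aux_rank (hr : 3 ≤ r) (hl : 1 ≤ l) (α : Fin l → Fin (r + 1) → F)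
    (hα : ∀ i : Fin l, Function.Injective (α i))
    (H : Matrix (Fin l ⊕ Fin 2) (Fin l × Fin (r + 1)) F)
    (hH1 : ∀ (i' : Fin l) (p : Fin l × Fin (r + 1)),
      H (Sum.inl i') p = if p.1 = i' then 1 else 0)
    (hH2 : ∀ p : Fin l × Fin (r + 1), H (Sum.inr 0) p = α p.1 p.2)
    (hH3 : ∀ p : Fin l × Fin (r + 1), H (Sum.inr 1) p = α p.1 p.2 ^ 2) :
    H.rank = l + 2 := by
  have hli : LinearIndependent F H.row := by
    rw [Fintype.linearIndependent_iff]
    intro g hg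
    have hp : ∀ i j, g (Sum.inl i) + g (Sum.inr 0) * α i j + g (Sum.inr 1) * α i j ^ 2 = 0 := by
      intro i j
      have h := congrFun hg (i, j)
      simp only [Fintype.sum_sum_type, Fin.sum_univ_two, Pi.add_apply, Finset.sum_apply,
        Pi.smul_apply, Matrix.row, hH1, hH2, hH3, smul_eq_mul, Pi.zero_apply] at h
      simpa [add_assoc] using h
    have hab : g (Sum.inr 0) = 0 ∧ g (Sum.inr 1) = 0 := by
      let i0 : Fin l := ⟨0, hl⟩
      have hne : ∀ a b : Fin (r + 1), a ≠ b → α i0 a ≠ α i0 b := fun a b h h' => h (hα i0 h')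
      refine aux_vand _ _ _ _ _ _ (hne ⟨0, by omega⟩ ⟨1, by omega⟩ (by simp))
        (hne ⟨0, by omega⟩ ⟨2, by omega⟩ (by simp)) (hne ⟨1, by omega⟩ ⟨2, by omega⟩ (by simp))
        (hp i0 _) (hp i0 _) (hp i0 _)
    intro s
    rcases s with i | k
    · simpa [hab.1, hab.2] using hp i 0
    · fin_cases k
      · exact hab.1
      · exact hab.2
  simpa using hli.rank_matrix

lemma aux_ceil (hr : 3 ≤ r) (hl : 1 ≤ l) {n : ℕ} (hn : n = l * (r + 1)) :
    (4 : ℤ) = (n : ℤ) - (n - l - 2 : ℕ) - ⌈((n - l - 2 : ℕ) : ℚ) / r⌉ + 2 := by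
  have h3 : 3 ≤ l * r := le_trans hr (Nat.le_mul_of_pos_left r hl)
  have hn' : n = l * r + l := by rw [hn]; ring
  obtain ⟨k, hk⟩ : ∃ k, k = n - l - 2 := ⟨_, rfl⟩
  have hk2 : k + 2 = l * r := by omega
  rw [← hk]
  have hc : ⌈((k : ℕ) : ℚ) / r⌉ = (l : ℤ) := by
    have hrq : (3 : ℚ) ≤ r := by exact_mod_cast hr
    have hkq : (k : ℚ) + 2 = l * r := by exact_mod_cast hk2
    rw [Int.ceil_eq_iff]
    constructor
    · rw [lt_div_iff₀ (by linarith)]; push_cast; nlinarith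
    · rw [div_le_iff₀ (by linarith)]; push_cast; linarith
  rw [hc]
  omega

end helpers

/-- Construction 2: with `r ≥ 3`, `n = l(r+1)`, distinct `α i ·` within each group, and the
parity-check matrix with locality rows and Vandermonde rows `α, α²`, the code
`{x : Hx = 0}` has dimension `n - l - 2`, all symbol locality `r`, and minimum distance `4`,
which equals the Singleton-like bound `n - k - ⌈k/r⌉ + 2` for `k = n - l - 2`. -/
theorem stmt_15 {F : Type*} [Field F] [Fintype F] [DecidableEq F]
    {l r n : ℕ} (hr : 3 ≤ r) (hl : 1 ≤ l) (hn : n = l * (r + 1))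
    (α : Fin l → Fin (r + 1) → F) (hα : ∀ i : Fin l, Function.Injective (α i))
    (H : Matrix (Fin l ⊕ Fin 2) (Fin l × Fin (r + 1)) F)
    (hH1 : ∀ (i' : Fin l) (p : Fin l × Fin (r + 1)),
      H (Sum.inl i') p = if p.1 = i' then 1 else 0)
    (hH2 : ∀ p : Fin l × Fin (r + 1), H (Sum.inr 0) p = α p.1 p.2)
    (hH3 : ∀ p : Fin l × Fin (r + 1), H (Sum.inr 1) p = α p.1 p.2 ^ 2) :
    Module.finrank F (LinearMap.ker H.mulVecLin) = n - l - 2 ∧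
    (∀ p : Fin l × Fin (r + 1), HasLocality (LinearMap.ker H.mulVecLin) p r) ∧
    minDist (LinearMap.ker H.mulVecLin) = 4 ∧
    (4 : ℤ) = (n : ℤ) - (n - l - 2 : ℕ) - ⌈((n - l - 2 : ℕ) : ℚ) / r⌉ + 2 := by
  have hmem := aux_mem_iff α H hH1 hH2 hH3
  refine ⟨?_, ?_, ?_, aux_ceil hr hl hn⟩
  · have h1 := LinearMap.finrank_range_add_finrank_ker H.mulVecLin
    have h2 : Module.finrank F (LinearMap.range H.mulVecLin) = l + 2 :=
      aux_rank hr hl α hα H hH1 hH2 hH3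
    rw [h2] at h1
    simp only [Module.finrank_fintype_fun_eq_card, Fintype.card_prod, Fintype.card_fin] at h1
    omega
  · rintro ⟨i, j⟩
    refine ⟨(Finset.univ.erase j).image (fun k => (i, k)), by simp, ?_, ?_⟩
    · exact Finset.card_image_le.trans (by simp)
    · intro c hc c' hc' h
      have e1 := ((hmem c).1 hc).1 i
      have e2 := ((hmem c').1 hc').1 i
      rw [← Finset.add_sum_erase _ _ (Finset.mem_univ j)] at e1 e2
      have e3 : ∑ k ∈ Finset.univ.erase j, c (i, k) = ∑ k ∈ Finset.univ.erase j, c' (i, k) :=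
        Finset.sum_congr rfl fun k hk => h _ (Finset.mem_image_of_mem _ hk)
      rw [e3] at e1
      exact add_right_cancel (e1.trans e2.symm)
  · have hlow : ∀ c ∈ LinearMap.ker H.mulVecLin, c ≠ 0 → 4 ≤ hammingNorm c := by
      intro c hc hc0
      obtain ⟨a, b, d⟩ := (hmem c).1 hc
      exact aux_lower α hα hr c hc0 a b d
    obtain ⟨c, hc0, hc4, hc⟩ := aux_upper α hr hl
    have hcm := (hmem c).2 hc
    have hin : 4 ∈ {w | ∃ c ∈ LinearMap.ker H.mulVecLin, c ≠ 0 ∧ hammingNorm c = w} :=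
      ⟨c, hcm, hc0, le_antisymm hc4 (hlow c hcm hc0)⟩
    apply le_antisymm
    · exact Nat.sInf_le hin
    · obtain ⟨c', h1, h2, h3⟩ := Nat.sInf_mem ⟨4, hin⟩
      unfold minDist
      rw [← h3]
      exact hlow c' h1 h2
end
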